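/- Let (Ω, 𝓕) be a measurable space, (Pₙ) a sequence of probability measures on Ω, (Λₙ) a sequence of nonnegative measurable functions Λₙ : Ω → ℝ with ∫ Λₙ dPₙ = 1, and set Qₙ := Pₙ.withDensity(Λₙ). Let q ≥ 1 and Yₙ : Ω → ℝ^q be measurable. Suppose there is a probability measure μ on ℝ^q × ℝ such that z ≥ 0 for μ-almost every (y, z), ∫ z dμ(y, z) = 1, and for every bounded continuous f : ℝ^q × ℝ → ℝ, ∫ f(Yₙ(ω), Λₙ(ω)) dPₙ(ω) → ∫ f dμ as n → ∞. Then for every bounded continuous g : ℝ^q → ℝ, ∫ g(Yₙ) dQₙ → ∫ g(y)·z dμ(y, z) as n → ∞. -/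

import Mathlib

/-!
The expectation of `g(Yₙ)` under `Qₙ` is `∫ g(Yₙ) Λₙ dPₙ`, but `(y, z) ↦ g(y) z` is unbounded, so
weak convergence does not apply to it directly. For `h ≥ 0`, truncating `z` at a level `M` gives
bounded continuous test functions increasing to `h(y) z`, hence the one-sided bound
`liminf ∫ h(Yₙ) Λₙ dPₙ ≥ ∫ h(y) z dμ` (`eventually_lt_integral_mul`). Applying it to both
`h = ‖g‖ + g` and `h = ‖g‖ - g`, and using that the total mass does not escape
(`∫ Λₙ dPₙ = 1 = ∫ z dμ`), turns this into the two-sided limit.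
-/

open MeasureTheory Filter

/-- The test function `(y, z) ↦ h(y) · min(z⁺, M)`, a bounded continuous truncation of `h(y) z`. -/
noncomputable def truncMul {E : Type*} [TopologicalSpace E] (h : BoundedContinuousFunction E ℝ)
    (M : ℕ) : BoundedContinuousFunction (E × ℝ) ℝ :=
  BoundedContinuousFunction.ofNormedAddCommGroup (fun p => h p.1 * min (max p.2 0) M)
    (by fun_prop) (‖h‖ * M) (fun p => by
      rw [norm_mul]
      have h0 : 0 ≤ min (max p.2 0) (M : ℝ) := le_min (le_max_right _ _) (Nat.cast_nonneg M)
      refine mul_le_mul (h.norm_coe_le_norm _) ?_ (norm_nonneg _) (norm_nonneg _)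
      rw [Real.norm_of_nonneg h0]
      exact min_le_right _ _)

lemma truncMul_apply {E : Type*} [TopologicalSpace E] (h : BoundedContinuousFunction E ℝ)
    (M : ℕ) (p : E × ℝ) : truncMul h M p = h p.1 * min (max p.2 0) M := rfl

lemma norm_truncMul_le {E : Type*} [TopologicalSpace E] (h : BoundedContinuousFunction E ℝ)
    (M : ℕ) (p : E × ℝ) : ‖truncMul h M p‖ ≤ ‖h‖ * |p.2| := by
  rw [truncMul_apply, norm_mul]
  have h0 : 0 ≤ min (max p.2 0) (M : ℝ) := le_min (le_max_right _ _) (Nat.cast_nonneg M)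
  refine mul_le_mul (h.norm_coe_le_norm _) ?_ (norm_nonneg _) (norm_nonneg _)
  rw [Real.norm_of_nonneg h0]
  exact (min_le_left _ _).trans (max_le (le_abs_self _) (abs_nonneg _))

lemma tendsto_integral_truncMul {E : Type*} [TopologicalSpace E] [MeasurableSpace E]
    [OpensMeasurableSpace (E × ℝ)] {μ : Measure (E × ℝ)}
    (hμpos : ∀ᵐ p ∂μ, 0 ≤ p.2) (hint : Integrable (fun p => p.2) μ)
    (h : BoundedContinuousFunction E ℝ) :
    Tendsto (fun M : ℕ => ∫ p, truncMul h M p ∂μ) atTop (nhds (∫ p, h p.1 * p.2 ∂μ)) := by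
  refine tendsto_integral_of_dominated_convergence (fun p => ‖h‖ * |p.2|)
    (fun M => (truncMul h M).continuous.measurable.aestronglyMeasurable)
    (hint.abs.const_mul _) (fun M => ae_of_all _ (norm_truncMul_le h M)) ?_
  filter_upwards [hμpos] with p hp
  obtain ⟨N, hN⟩ := exists_nat_ge p.2
  refine tendsto_const_nhds.congr' ?_
  filter_upwards [eventually_ge_atTop N] with M hM
  rw [truncMul_apply, max_eq_left hp, min_eq_left (hN.trans (Nat.cast_le.mpr hM))]

lemma integrable_bcf_mul {Ω E : Type*} [MeasurableSpace Ω] [TopologicalSpace E]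
    [MeasurableSpace E] [OpensMeasurableSpace E] {P : Measure Ω} {Y : Ω → E} {L : Ω → ℝ}
    (hY : Measurable Y) (hL : Integrable L P) (h : BoundedContinuousFunction E ℝ) :
    Integrable (fun ω => h (Y ω) * L ω) P :=
  hL.bdd_mul (c := ‖h‖) (h.continuous.measurable.comp hY).aestronglyMeasurable
    (ae_of_all _ fun _ => h.norm_coe_le_norm _)

/-- The Fatou-type half of the argument: `liminf ∫ h(Yₙ) Λₙ dPₙ ≥ ∫ h(y) z dμ` for `h ≥ 0`. -/
lemma eventually_lt_integral_mul {Ω E : Type*} [MeasurableSpace Ω] [TopologicalSpace E]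
    [MeasurableSpace E] [OpensMeasurableSpace E] [OpensMeasurableSpace (E × ℝ)]
    {P : ℕ → Measure Ω} {Λ : ℕ → Ω → ℝ} (hΛ0 : ∀ n ω, 0 ≤ Λ n ω)
    (hΛint : ∀ n, Integrable (Λ n) (P n))
    {Y : ℕ → Ω → E} (hY : ∀ n, Measurable (Y n)) {μ : Measure (E × ℝ)}
    (hμpos : ∀ᵐ p ∂μ, 0 ≤ p.2) (hint : Integrable (fun p => p.2) μ)
    (hconv : ∀ f : BoundedContinuousFunction (E × ℝ) ℝ,
      Tendsto (fun n => ∫ ω, f (Y n ω, Λ n ω) ∂(P n)) atTop (nhds (∫ p, f p ∂μ)))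
    (h : BoundedContinuousFunction E ℝ) (h0 : ∀ y, 0 ≤ h y)
    {a : ℝ} (ha : a < ∫ p, h p.1 * p.2 ∂μ) :
    ∀ᶠ n in atTop, a < ∫ ω, h (Y n ω) * Λ n ω ∂(P n) := by
  obtain ⟨M, hM⟩ := ((tendsto_integral_truncMul hμpos hint h).eventually_const_lt ha).exists
  filter_upwards [(hconv (truncMul h M)).eventually_const_lt hM] with n hn
  refine hn.trans_le (integral_mono_of_nonneg (ae_of_all _ fun ω => ?_)
    (integrable_bcf_mul (hY n) (hΛint n) h) (ae_of_all _ fun ω => ?_))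
  · exact mul_nonneg (h0 _) (le_min (le_max_right _ _) (Nat.cast_nonneg M))
  · refine mul_le_mul_of_nonneg_left ?_ (h0 _)
    exact (min_le_left _ _).trans (max_le le_rfl (hΛ0 n ω))

lemma integral_norm_add_sub_mul {E α : Type*} [TopologicalSpace E] [MeasurableSpace E]
    [OpensMeasurableSpace E] [MeasurableSpace α] (g : BoundedContinuousFunction E ℝ)
    (ν : Measure α) (X : α → E) (L : α → ℝ) (hX : Measurable X) (hL : Integrable L ν)
    (hL1 : ∫ x, L x ∂ν = 1) :
    ∫ x, (BoundedContinuousFunction.const E ‖g‖ + g) (X x) * L x ∂ν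
        = ‖g‖ + ∫ x, g (X x) * L x ∂ν ∧
      ∫ x, (BoundedContinuousFunction.const E ‖g‖ - g) (X x) * L x ∂ν
        = ‖g‖ - ∫ x, g (X x) * L x ∂ν := by
  have hgL := integrable_bcf_mul hX hL g
  simp only [BoundedContinuousFunction.add_apply, BoundedContinuousFunction.sub_apply,
    BoundedContinuousFunction.const_apply, add_mul, sub_mul]
  rw [integral_add (hL.const_mul _) hgL, integral_sub (hL.const_mul _) hgL,
    integral_const_mul, hL1, mul_one]
  exact ⟨rfl, rfl⟩

/-- LeCam's third lemma: if under `Pₙ` the pair `(Yₙ, Λₙ)` converges in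
distribution to a limit law `μ` with nonnegative second coordinate of mean `1`, then
under `Qₙ = Pₙ.withDensity Λₙ` the law of `Yₙ` converges to the tilted limit
`∫ g(y)·z dμ(y,z)`. -/
theorem stmt9 {Ω : Type*} [MeasurableSpace Ω]
    (P : ℕ → Measure Ω) [∀ n, IsProbabilityMeasure (P n)]
    (Λ : ℕ → Ω → ℝ) (hΛmeas : ∀ n, Measurable (Λ n)) (hΛ0 : ∀ n ω, 0 ≤ Λ n ω)
    (hΛ1 : ∀ n, ∫ ω, Λ n ω ∂(P n) = 1)
    (Q : ℕ → Measure Ω)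
    (hQ : ∀ n, Q n = (P n).withDensity (fun ω => ENNReal.ofReal (Λ n ω)))
    (q : ℕ) (hq : 1 ≤ q)
    (Y : ℕ → Ω → (Fin q → ℝ)) (hY : ∀ n, Measurable (Y n))
    (μ : Measure ((Fin q → ℝ) × ℝ)) [IsProbabilityMeasure μ]
    (hμpos : ∀ᵐ p ∂μ, 0 ≤ p.2) (hμ1 : ∫ p, p.2 ∂μ = 1)
    (hconv : ∀ f : BoundedContinuousFunction ((Fin q → ℝ) × ℝ) ℝ,
      Tendsto (fun n => ∫ ω, f (Y n ω, Λ n ω) ∂(P n)) atTop (nhds (∫ p, f p ∂μ))) :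
    ∀ g : BoundedContinuousFunction (Fin q → ℝ) ℝ,
      Tendsto (fun n => ∫ ω, g (Y n ω) ∂(Q n)) atTop
        (nhds (∫ p, g p.1 * p.2 ∂μ)) := by
  intro g
  -- A function with nonzero Bochner integral is integrable.
  have hΛint : ∀ n, Integrable (Λ n) (P n) := fun n =>
    Integrable.of_integral_ne_zero (by rw [hΛ1 n]; exact one_ne_zero)
  have hint : Integrable (fun p : (Fin q → ℝ) × ℝ => p.2) μ :=
    Integrable.of_integral_ne_zero (by rw [hμ1]; exact one_ne_zero)
  have hQint : ∀ n, ∫ ω, g (Y n ω) ∂(Q n) = ∫ ω, g (Y n ω) * Λ n ω ∂(P n) := fun n => by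
    rw [hQ n, integral_withDensity_eq_integral_toReal_smul
      (hΛmeas n).ennreal_ofReal (ae_of_all _ fun _ => ENNReal.ofReal_lt_top)]
    refine integral_congr_ae (ae_of_all _ fun ω => ?_)
    simp only [ENNReal.toReal_ofReal (hΛ0 n ω), smul_eq_mul, mul_comm]
  simp only [hQint]
  have hμeq := integral_norm_add_sub_mul g μ Prod.fst Prod.snd measurable_fst hint hμ1
  have hPeq := fun n => integral_norm_add_sub_mul g (P n) (Y n) (Λ n) (hY n) (hΛint n) (hΛ1 n)
  have hbd : ∀ y, |g y| ≤ ‖g‖ := fun y => g.norm_coe_le_norm y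
  rw [tendsto_order]
  constructor
  · intro a ha
    have := eventually_lt_integral_mul hΛ0 hΛint hY hμpos hint hconv
      (BoundedContinuousFunction.const _ ‖g‖ + g)
      (fun y => show 0 ≤ ‖g‖ + g y by linarith [neg_le_of_abs_le (hbd y)])
      (a := ‖g‖ + a) (by rw [hμeq.1]; linarith)
    filter_upwards [this] with n hn
    rw [(hPeq n).1] at hn
    linarith
  · intro a ha
    have := eventually_lt_integral_mul hΛ0 hΛint hY hμpos hint hconv
      (BoundedContinuousFunction.const _ ‖g‖ - g)
      (fun y => show 0 ≤ ‖g‖ - g y by linarith [le_of_abs_le (hbd y)])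
      (a := ‖g‖ - a) (by rw [hμeq.2]; linarith)
    filter_upwards [this] with n hn
    rw [(hPeq n).2] at hn
    linarith
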